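/- Let n ≥ 5, p ∈ (0,1), and m = ⌊np⌋ with 1 ≤ m ≤ n−2. Define ψ(m,p) = (m+1)·C(n,m+1)·p^{m+1}·(1−p)^{n−m}. Then there exist universal constants c > 0.29 and c' < 0.44 such that c·√n·√(p(1−p)) ≤ ψ(m,p) ≤ c'·√n·√(p(1−p)). -/

import Mathlib

/-!
Write `n = a + b + 1` with `a = m`. After division by `√n √(p (1 - p))`, the logarithm of `ψ(m, p)`
depends on `p` only through the concave function `(a + 1/2) log p + (b + 1/2) log (1 - p)`.

Its maximum is at `p = (a + 1/2) / n`. The value there splits as `S n - B a - B b`, where `S` and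
`B` are the errors in the logarithms of Stirling's and Burnside's approximations to the factorial.
As `S` decreases and `B` increases, the worst case is `a = b = 1`, and its value is `log (√3 / 4)`.

On `[a / n, (a + 1) / n]` its minimum is at an endpoint. The values there are
`S n - S a - S (b + 1)` and `S n - S b - S (a + 1)`; since `S` decreases to `log (2π) / 2`, both are
at least `log (2π) / 2 - S 1 - S 2`, which gives the constant `4 √π e⁻³`.
-/

section

open Real
open scoped Nat

/-- The error `log k! - log (k ^ (k + 1/2) * e ^ (-k))` of Stirling's approximation, with the
limiting constant `log (2π) / 2` left in. -/
noncomputable def stirlingError (k : ℕ) : ℝ :=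
  log k ! - ((k + 1 / 2) * log k - k)

/-- The error `log k! - log (((k + 1/2) / e) ^ (k + 1/2))` of Burnside's approximation, with the
limiting constant `log (2π) / 2` left in. -/
noncomputable def burnsideError (k : ℕ) : ℝ :=
  log k ! - ((k + 1 / 2) * log (k + 1 / 2) - (k + 1 / 2))

/-- The function `ψ(m, p)`, with its dependence on `n` made explicit. -/
noncomputable def psi (n m : ℕ) (p : ℝ) : ℝ :=
  ((m : ℝ) + 1) * (n.choose (m + 1) : ℝ) * p ^ (m + 1) * (1 - p) ^ (n - m)

/-- The logarithm of `ψ(a, p) / (√n √(p (1 - p)))` for `n = a + b + 1`. The parameters `a` and `b`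
are used in place of `n` and `m` because of the symmetry `(a, b, p) ↦ (b, a, 1 - p)`. -/
noncomputable def logPsiRatio (a b : ℕ) (p : ℝ) : ℝ :=
  log (a + b + 1)! - log a ! - log b ! - log (a + b + 1) / 2
    + ((a + 1 / 2) * log p + (b + 1 / 2) * log (1 - p))

lemma log_factorial_succ (k : ℕ) : log (k + 1)! = log (k + 1) + log k ! := by
  rw [Nat.factorial_succ, Nat.cast_mul, Nat.cast_add_one, log_mul (by positivity) (by positivity)]

lemma stirlingError_eq_log_stirlingSeq {k : ℕ} (hk : k ≠ 0) :
    stirlingError k = log (Stirling.stirlingSeq k) + log 2 / 2 := by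
  have hk' : (k : ℝ) ≠ 0 := Nat.cast_ne_zero.2 hk
  rw [stirlingError, Stirling.log_stirlingSeq_formula, log_mul two_ne_zero hk',
    log_div hk' (exp_ne_zero 1), log_exp]
  ring

lemma antitoneOn_stirlingError : AntitoneOn stirlingError (Set.Ici 1) := by
  intro j (hj : 1 ≤ j) k (hk : 1 ≤ k) hjk
  rw [stirlingError_eq_log_stirlingSeq (by omega), stirlingError_eq_log_stirlingSeq (by omega)]
  obtain ⟨j, rfl⟩ := Nat.exists_eq_add_of_le' hj
  obtain ⟨k, rfl⟩ := Nat.exists_eq_add_of_le' hk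
  exact add_le_add_left (Stirling.log_stirlingSeq'_antitone (Nat.le_of_add_le_add_right hjk)) _

lemma log_two_pi_div_two_le_stirlingError {k : ℕ} (hk : k ≠ 0) :
    log (2 * π) / 2 ≤ stirlingError k := by
  have h := log_le_log (sqrt_pos.2 pi_pos) (Stirling.sqrt_pi_le_stirlingSeq hk)
  rw [log_sqrt pi_pos.le] at h
  rw [stirlingError_eq_log_stirlingSeq hk, log_mul two_ne_zero pi_ne_zero]
  linarith

lemma integral_log_le_mul_log_midpoint {u v : ℝ} (hu : 0 < u) (huv : u ≤ v) :
    ∫ x in u..v, log x ≤ (v - u) * log ((u + v) / 2) := by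
  set c := (u + v) / 2 with hc
  have hc0 : 0 < c := by linarith
  have tangent : ∀ x ∈ Set.Icc u v, log x ≤ log c - 1 + x / c := fun x hx ↦ by
    have hx0 : 0 < x := hu.trans_le hx.1
    have h := log_le_sub_one_of_pos (div_pos hx0 hc0)
    rw [log_div hx0.ne' hc0.ne'] at h
    linarith
  calc ∫ x in u..v, log x ≤ ∫ x in u..v, (log c - 1 + x / c) :=
        intervalIntegral.integral_mono_on huv intervalIntegral.intervalIntegrable_log'
          (Continuous.intervalIntegrable (by fun_prop) u v) tangent
    _ = (v - u) * (log c - 1) + (v ^ 2 - u ^ 2) / 2 / c := by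
        rw [intervalIntegral.integral_add (by simp)
          (Continuous.intervalIntegrable (by fun_prop) u v), intervalIntegral.integral_const,
          intervalIntegral.integral_div, integral_id, smul_eq_mul]
    _ = (v - u) * log c := by
        have : (v ^ 2 - u ^ 2) / 2 = (v - u) * c := by rw [hc]; ring
        rw [this, mul_div_cancel_right₀ _ hc0.ne']
        ring

lemma monotone_burnsideError : Monotone burnsideError := by
  refine monotone_nat_of_le_succ fun k ↦ ?_
  have h := integral_log_le_mul_log_midpoint (u := k + 1 / 2) (v := k + 1 + 1 / 2)
    (by positivity) (by linarith)
  rw [integral_log, show ((k : ℝ) + 1 / 2 + (k + 1 + 1 / 2)) / 2 = k + 1 by ring] at h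
  rw [burnsideError, burnsideError, log_factorial_succ, Nat.cast_add_one]
  linarith

lemma mul_log_add_mul_log_one_sub_le {α β p : ℝ} (hα : 0 < α) (hβ : 0 < β) (hp : 0 < p)
    (hp1 : p < 1) :
    α * log p + β * log (1 - p) ≤ α * log α + β * log β - (α + β) * log (α + β) := by
  have hs : 0 < α + β := add_pos hα hβ
  have gibbs : ∀ {γ x : ℝ}, 0 < γ → 0 < x →
      γ * log x ≤ γ * log γ - γ * log (α + β) + (x * (α + β) - γ) := fun {γ x} hγ hx ↦ by
    have h := mul_le_mul_of_nonneg_left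
      (log_le_sub_one_of_pos (div_pos (mul_pos hx hs) hγ)) hγ.le
    rw [log_div (mul_pos hx hs).ne' hγ.ne', log_mul hx.ne' hs.ne', mul_sub γ (_ / γ),
      mul_div_cancel₀ _ hγ.ne'] at h
    linarith
  linarith [gibbs hα hp, gibbs hβ (sub_pos.2 hp1)]

lemma concaveOn_mul_log_add_mul_log_one_sub {α β : ℝ} (hα : 0 ≤ α) (hβ : 0 ≤ β) :
    ConcaveOn ℝ (Set.Ioo 0 1) fun p ↦ α * log p + β * log (1 - p) := by
  have hlog : ConcaveOn ℝ (Set.Ioi 0) log := strictConcaveOn_log_Ioi.concaveOn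
  have hlog' : ConcaveOn ℝ (Set.Ioo 0 1) fun p ↦ log (1 - p) := by
    have h := hlog.comp_affineMap (AffineMap.lineMap (1 : ℝ) 0)
    have e : log ∘ AffineMap.lineMap (1 : ℝ) 0 = fun p ↦ log (1 - p) := by
      ext p; simp [AffineMap.lineMap_apply_module]
    rw [e] at h
    refine h.subset (fun p hp ↦ ?_) (convex_Ioo 0 1)
    simpa [AffineMap.lineMap_apply_module] using hp.2
  exact ((hlog.subset Set.Ioo_subset_Ioi_self (convex_Ioo 0 1)).smul hα).add (hlog'.smul hβ)

lemma concaveOn_logPsiRatio (a b : ℕ) : ConcaveOn ℝ (Set.Ioo 0 1) (logPsiRatio a b) :=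
  (concaveOn_const _ (convex_Ioo 0 1)).add
    (concaveOn_mul_log_add_mul_log_one_sub (by positivity) (by positivity))

lemma logPsiRatio_one_sub (a b : ℕ) (p : ℝ) : logPsiRatio b a (1 - p) = logPsiRatio a b p := by
  rw [logPsiRatio, logPsiRatio, add_comm b a, add_comm (b : ℝ) a, sub_sub_cancel]
  ring

lemma logPsiRatio_le (a b : ℕ) {p : ℝ} (hp : 0 < p) (hp1 : p < 1) :
    logPsiRatio a b p ≤ stirlingError (a + b + 1) - burnsideError a - burnsideError b := by
  have h := mul_log_add_mul_log_one_sub_le (α := a + 1 / 2) (β := b + 1 / 2)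
    (by positivity) (by positivity) hp hp1
  rw [show (a : ℝ) + 1 / 2 + (b + 1 / 2) = a + b + 1 by ring] at h
  rw [logPsiRatio, stirlingError, burnsideError, burnsideError]
  push_cast
  linarith

lemma logPsiRatio_div {a : ℕ} (ha : a ≠ 0) (b : ℕ) :
    logPsiRatio a b (a / (a + b + 1)) =
      stirlingError (a + b + 1) - stirlingError a - stirlingError (b + 1) := by
  have h : 1 - (a : ℝ) / (a + b + 1) = (b + 1) / (a + b + 1) := by field_simp; ring
  rw [logPsiRatio, h, log_div (Nat.cast_ne_zero.2 ha) (by positivity),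
    log_div (by positivity) (by positivity), stirlingError, stirlingError, stirlingError,
    log_factorial_succ b]
  push_cast
  ring

lemma stirlingError_three_sub_burnsideError_one :
    stirlingError 3 - burnsideError 1 - burnsideError 1 = log (√3 / 4) := by
  have h6 : log 6 = log 2 + log 3 := by rw [← log_mul (by norm_num) (by norm_num)]; norm_num
  have h4 : log 4 = 2 * log 2 := by rw [← log_rpow two_pos]; norm_num
  have h32 : log (3 / 2) = log 3 - log 2 := log_div (by norm_num) (by norm_num)
  rw [log_div (by positivity) (by norm_num), log_sqrt (by norm_num), h4]
  norm_num [stirlingError, burnsideError, Nat.factorial, h6, h32]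
  ring

lemma log_two_pi_sub_stirlingError_one_sub_two :
    log (2 * π) / 2 - stirlingError 1 - stirlingError 2 = log (4 * √π * exp (-3)) := by
  have h4 : log 4 = 2 * log 2 := by rw [← log_rpow two_pos]; norm_num
  rw [log_mul (by positivity) (exp_ne_zero _), log_mul four_ne_zero (by positivity), log_exp,
    log_sqrt pi_pos.le, log_mul two_ne_zero pi_ne_zero, h4]
  norm_num [stirlingError, Nat.factorial]
  ring

lemma logPsiRatio_le_log_sqrt_three_div_four {a b : ℕ} {p : ℝ} (ha : 1 ≤ a) (hb : 1 ≤ b)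
    (hp : 0 < p) (hp1 : p < 1) : logPsiRatio a b p ≤ log (√3 / 4) := by
  have hn : stirlingError (a + b + 1) ≤ stirlingError 3 :=
    antitoneOn_stirlingError (Set.mem_Ici.2 (by norm_num)) (Set.mem_Ici.2 (by omega)) (by omega)
  linarith [logPsiRatio_le a b hp hp1, monotone_burnsideError ha, monotone_burnsideError hb,
    stirlingError_three_sub_burnsideError_one]

lemma log_four_mul_sqrt_pi_mul_exp_le_logPsiRatio_div {a b : ℕ} (ha : 1 ≤ a) (hb : 1 ≤ b) :
    log (4 * √π * exp (-3)) ≤ logPsiRatio a b (a / (a + b + 1)) := by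
  have h1 : stirlingError a ≤ stirlingError 1 := antitoneOn_stirlingError Set.self_mem_Ici ha ha
  have h2 : stirlingError (b + 1) ≤ stirlingError 2 :=
    antitoneOn_stirlingError (Set.mem_Ici.2 one_le_two) (Set.mem_Ici.2 (by omega)) (by omega)
  rw [logPsiRatio_div (by omega)]
  linarith [log_two_pi_div_two_le_stirlingError (Nat.succ_ne_zero (a + b)),
    log_two_pi_sub_stirlingError_one_sub_two]

lemma log_four_mul_sqrt_pi_mul_exp_le_logPsiRatio {a b : ℕ} {p : ℝ} (ha : 1 ≤ a) (hb : 1 ≤ b)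
    (hap : a / (a + b + 1) ≤ p) (hpa : p ≤ (a + 1) / (a + b + 1)) :
    log (4 * √π * exp (-3)) ≤ logPsiRatio a b p := by
  have ha0 : (0 : ℝ) < a := Nat.cast_pos.2 ha
  have hb0 : (0 : ℝ) < b := Nat.cast_pos.2 hb
  have hleft := log_four_mul_sqrt_pi_mul_exp_le_logPsiRatio_div ha hb
  have hright : log (4 * √π * exp (-3)) ≤ logPsiRatio a b ((a + 1) / (a + b + 1)) := by
    have h : 1 - ((a : ℝ) + 1) / (a + b + 1) = b / (b + a + 1) := by field_simp; ring
    rw [← logPsiRatio_one_sub, h]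
    exact log_four_mul_sqrt_pi_mul_exp_le_logPsiRatio_div hb ha
  have hx : (a : ℝ) / (a + b + 1) ∈ Set.Ioo (0 : ℝ) 1 :=
    ⟨div_pos ha0 (by positivity), (div_lt_one (by positivity)).2 (by linarith)⟩
  have hy : ((a : ℝ) + 1) / (a + b + 1) ∈ Set.Ioo (0 : ℝ) 1 :=
    ⟨by positivity, (div_lt_one (by positivity)).2 (by linarith)⟩
  exact (le_min hleft hright).trans
    ((concaveOn_logPsiRatio a b).min_le_of_mem_Icc hx hy ⟨hap, hpa⟩)

lemma succ_mul_choose_eq_factorial_div (a b : ℕ) :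
    ((a : ℝ) + 1) * ((a + b + 1).choose (a + 1) : ℝ) = (a + b + 1)! / (a ! * b !) := by
  rw [Nat.cast_choose ℝ (by omega), show a + b + 1 - (a + 1) = b by omega, Nat.factorial_succ a]
  push_cast
  field_simp

lemma psi_eq_exp_logPsiRatio_mul (a b : ℕ) {p : ℝ} (hp : 0 < p) (hp1 : p < 1) :
    psi (a + b + 1) a p = exp (logPsiRatio a b p) * √(a + b + 1 : ℕ) * √(p * (1 - p)) := by
  have hq : 0 < 1 - p := sub_pos.2 hp1
  rw [psi, succ_mul_choose_eq_factorial_div, show a + b + 1 - a = b + 1 by omega]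
  refine log_injOn_pos (Set.mem_Ioi.2 (by positivity)) (Set.mem_Ioi.2 (by positivity)) ?_
  rw [log_mul (by positivity) (by positivity), log_mul (by positivity) (by positivity),
    log_div (by positivity) (by positivity), log_mul (by positivity) (by positivity), log_pow,
    log_pow, log_mul (by positivity) (by positivity), log_mul (by positivity) (by positivity),
    log_exp, log_sqrt (by positivity), log_sqrt (by positivity), log_mul hp.ne' hq.ne', logPsiRatio]
  push_cast
  ring

lemma lt_four_mul_sqrt_pi_mul_exp : 0.29 < 4 * √π * exp (-3) := by
  have hpi : 1.7 < √π := lt_sqrt_of_sq_lt (by linarith [pi_gt_three])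
  have hexp : exp 3 < 23 := by
    calc exp 3 = exp 1 ^ 3 := by rw [← exp_nat_mul]; norm_num
      _ < 2.7182818286 ^ 3 := by gcongr; exact exp_one_lt_d9
      _ < 23 := by norm_num
  rw [exp_neg, ← div_eq_mul_inv, lt_div_iff₀ (exp_pos 3)]
  linarith

lemma sqrt_three_div_four_lt : √3 / 4 < 0.44 := by
  have h : √3 < 1.76 := (sqrt_lt' (by norm_num)).2 (by norm_num)
  linarith

/-- The constant `√3 / 4` is attained at `n = 3`, `m = 1`, `p = 1/2`. -/
theorem stmt7_general {n m : ℕ} {p : ℝ} (hm : 1 ≤ m) (hmn : m + 2 ≤ n) (hp : 0 < p) (hp1 : p < 1) :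
    ((m : ℝ) ≤ n * p → n * p ≤ m + 1 → 4 * √π * exp (-3) * √n * √(p * (1 - p)) ≤ psi n m p) ∧
      psi n m p ≤ √3 / 4 * √n * √(p * (1 - p)) := by
  obtain ⟨b, rfl⟩ : ∃ b, n = m + b + 1 := ⟨n - m - 1, by omega⟩
  have hb : 1 ≤ b := by omega
  rw [psi_eq_exp_logPsiRatio_mul m b hp hp1]
  constructor
  · intro hle hge
    push_cast at hle hge
    gcongr
    rw [← log_le_iff_le_exp (by positivity)]
    exact log_four_mul_sqrt_pi_mul_exp_le_logPsiRatio hm hb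
      ((div_le_iff₀' (by positivity)).2 hle) ((le_div_iff₀' (by positivity)).2 hge)
  · gcongr
    rw [← le_log_iff_exp_le (by positivity)]
    exact logPsiRatio_le_log_sqrt_three_div_four hm hb hp hp1

end

/-- with `ψ(m,p) = (m+1) C(n,m+1) p^{m+1} (1-p)^{n-m}` and `m = ⌊np⌋`,
there exist universal constants `c > 0.29` and `c' < 0.44` such that for all
`n ≥ 5` and `p ∈ (0,1)` with `1 ≤ m ≤ n-2`,
`c √n √(p(1-p)) ≤ ψ(m,p) ≤ c' √n √(p(1-p))`. -/
theorem stmt7 :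
    ∃ c c' : ℝ, 0.29 < c ∧ c' < 0.44 ∧
      ∀ (n : ℕ) (p : ℝ) (m : ℕ), 5 ≤ n → 0 < p → p < 1 → m = ⌊(n : ℝ) * p⌋₊ →
        1 ≤ m → m ≤ n - 2 →
        c * Real.sqrt n * Real.sqrt (p * (1 - p))
            ≤ ((m : ℝ) + 1) * (n.choose (m + 1) : ℝ) * p ^ (m + 1) * (1 - p) ^ (n - m) ∧
        ((m : ℝ) + 1) * (n.choose (m + 1) : ℝ) * p ^ (m + 1) * (1 - p) ^ (n - m)
            ≤ c' * Real.sqrt n * Real.sqrt (p * (1 - p)) := by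
  refine ⟨_, _, lt_four_mul_sqrt_pi_mul_exp, sqrt_three_div_four_lt, fun n p m _ hp hp1 hm h1 h2 ↦
    (stmt7_general h1 (by omega) hp hp1).imp_left fun h ↦ h ?_ ?_⟩
  · exact hm ▸ Nat.floor_le (by positivity)
  · exact hm ▸ (Nat.lt_floor_add_one _).le
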